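/- arXiv:1003.0689 — 3 statements merged into one kernel-verified Lean document; each statement's English description precedes it below -/
import Mathlib

section
/- Let m ≥ 3, λ = (m−2)/2 and k ≥ 1. For fixed x ∈ ℝ^m∖{0} consider the polynomial in y given by H_k(y) = (|x||y|)^k C_k^λ(⟨ξ,η⟩), where ξ = x/|x| and η = y/|y|. Then, with ∂_y the Dirac operator in the variable y and y the vector variable in Cl_{0,m}, one has for all y ≠ 0: y ∂_y H_k(y) = −k (|x||y|)^k C_k^λ(⟨ξ,η⟩) − 2λ (|x||y|)^{k−1} (x∧y) C_{k−1}^{λ+1}(⟨ξ,η⟩). Consequently, writing H_k = F_k + G_k with F_k = (1 − k/(2k+m−2)) H_k − (2λ/(2k+m−2)) (x∧y) (|x||y|)^{k−1} C_{k−1}^{λ+1}(⟨ξ,η⟩) and G_k = (1/(2k+m−2)) [ k H_k + 2λ (x∧y)(|x||y|)^{k−1} C_{k−1}^{λ+1}(⟨ξ,η⟩) ], the polynomial F_k satisfies ∂_y F_k = 0. -/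
open scoped BigOperators
open MeasureTheory

noncomputable section

namespace CliffordFourier

/-- Concrete model of the complexified Clifford algebra `Cl_{0,m} ⊗ ℂ`:
an element is the family of its complex coefficients on the canonical basis
`e_S = e_{i₁} ⋯ e_{i_k}` (for `S = {i₁ < … < i_k} ⊆ {0,…,m-1}`). -/
def Cl (m : ℕ) : Type := Finset (Fin m) → ℂ

variable {m : ℕ}

instance : NormedAddCommGroup (Cl m) :=
  inferInstanceAs (NormedAddCommGroup (Finset (Fin m) → ℂ))
instance : NormedSpace ℝ (Cl m) :=
  inferInstanceAs (NormedSpace ℝ (Finset (Fin m) → ℂ))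
instance : Module ℂ (Cl m) := inferInstanceAs (Module ℂ (Finset (Fin m) → ℂ))
instance : CompleteSpace (Cl m) := inferInstanceAs (CompleteSpace (Finset (Fin m) → ℂ))

/-- The coefficient of `a` on the basis element `e_S`. -/
def coeff (a : Cl m) : Finset (Fin m) → ℂ := a

/-- Build an element of the Clifford algebra from its coefficients. -/
def ofCoeff (f : Finset (Fin m) → ℂ) : Cl m := f

/-- `1 = e_∅`. -/
instance : One (Cl m) := ⟨ofCoeff fun S => if S = (∅ : Finset (Fin m)) then 1 else 0⟩

/-- Clifford multiplication, determined by the relations `e_i e_j = - e_j e_i` (`i ≠ j`)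
and `e_i² = -1`; on basis elements it is given by
`e_T · e_U = (-1)^{#{(t,u) ∈ T×U : u < t}} · (-1)^{#(T∩U)} · e_{T Δ U}`. -/
instance : Mul (Cl m) :=
  ⟨fun a b => ofCoeff fun S => ∑ T : Finset (Fin m),
    ((-1 : ℂ) ^ ((((T ×ˢ (symmDiff T S)).filter fun p : Fin m × Fin m => p.2 < p.1).card)
        + (T ∩ (symmDiff T S)).card))
      * coeff a T * coeff b (symmDiff T S)⟩

/-- The generator `e_i`. -/
def e (m : ℕ) (i : Fin m) : Cl m := ofCoeff fun S => if S = {i} then 1 else 0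

/-- The embedding of a vector `x ∈ ℝ^m` as `x = Σ_i x_i e_i` in the Clifford algebra. -/
def vec (m : ℕ) (x : Fin m → ℝ) : Cl m := ∑ i : Fin m, (x i : ℂ) • e m i

/-- The Euclidean inner product `⟨x,y⟩ = Σ_i x_i y_i`. -/
def ip (x y : Fin m → ℝ) : ℝ := ∑ i, x i * y i

/-- The Euclidean norm `|x|`. -/
def nrm (x : Fin m → ℝ) : ℝ := Real.sqrt (ip x x)

/-- The wedge product `x∧y = Σ_{j<k} e_j e_k (x_j y_k - x_k y_j)`. -/
def wedge (m : ℕ) (x y : Fin m → ℝ) : Cl m :=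
  ∑ j : Fin m, ∑ k : Fin m,
    if j < k then ((x j * y k - x k * y j : ℝ) : ℂ) • (e m j * e m k) else 0

/-- Complex conjugation of the coefficients. -/
def cconj (a : Cl m) : Cl m := ofCoeff fun S => starRingEnd ℂ (coeff a S)

/-- The partial derivative `∂_{x_i}` of a Clifford-algebra-valued function. -/
def pder (i : Fin m) (f : (Fin m → ℝ) → Cl m) : (Fin m → ℝ) → Cl m :=
  fun x => fderiv ℝ f x (Pi.single i 1)

/-- The Dirac operator `∂_x = Σ_i e_i ∂_{x_i}`. -/
def dirac (f : (Fin m → ℝ) → Cl m) : (Fin m → ℝ) → Cl m :=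
  fun x => ∑ i : Fin m, e m i * pder i f x

/-- The Euler operator `E = Σ_i x_i ∂_{x_i}`. -/
def euler (f : (Fin m → ℝ) → Cl m) : (Fin m → ℝ) → Cl m :=
  fun x => ∑ i : Fin m, x i • pder i f x

/-- The Laplacian `Δ = Σ_i ∂_{x_i}²`. -/
def lapl (f : (Fin m → ℝ) → Cl m) : (Fin m → ℝ) → Cl m :=
  fun x => ∑ i : Fin m, pder i (pder i f) x

/-- The Gegenbauer polynomial `C_k^λ(w)`, defined through the standard three-term
recurrence, equivalent to the generating function `(1-2wt+t²)^{-λ} = Σ_k C_k^λ(w) t^k`. -/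
def geg (lam : ℝ) : ℕ → ℝ → ℝ
  | 0, _ => 1
  | 1, w => 2 * lam * w
  | (k+2), w => (2 * ((k : ℝ) + 1 + lam) * w * geg lam (k+1) w
      - ((k : ℝ) + 2 * lam) * geg lam k w) / ((k : ℝ) + 2)

/-!
The sign in `e_T e_U = ± e_{T ∆ U}` is bimultiplicative for the symmetric difference, so `Cl m` is
an associative algebra and `x ∧ y = x y + ⟨x, y⟩ = -y x - ⟨x, y⟩`.

The polynomial `H_k` is the coefficient of `t ^ k` in `(1 - 2 s t + r t²)^(-λ)` at `s = ⟨x, y⟩`,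
`r = |x|² |y|²`. Differentiating a generating function of this kind in `s` or `r` only raises `λ` by
one and lowers the degree, so `∂_y H_k` is an explicit combination of the vectors `x` and `y`. Both
claims then reduce to the two contiguous relations expressing `k C_k^λ` and `(k + 2λ) C_k^λ` through
the polynomials of parameter `λ + 1`: the first one gives `y ∂_y H_k`, and the pair at parameter
`λ + 1` makes the coefficients of `x` and of `y` in `∂_y F_k` vanish.
-/

section Development

/-! ### The Clifford algebra -/

/-- The sign in `e_T · e_U = ± e_{T ∆ U}`, as a product over pairs so that it is visibly
bimultiplicative with respect to symmetric difference. -/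
def bladeSign (T U : Finset (Fin m)) : ℂ := ∏ t ∈ T, ∏ u ∈ U, if u ≤ t then -1 else 1

theorem neg_one_pow_eq_bladeSign (T U : Finset (Fin m)) :
    (-1 : ℂ) ^ (((T ×ˢ U).filter fun p : Fin m × Fin m => p.2 < p.1).card + (T ∩ U).card)
      = bladeSign T U := by
  have card_lt : (-1 : ℂ) ^ ((T ×ˢ U).filter fun p : Fin m × Fin m => p.2 < p.1).card
      = ∏ t ∈ T, ∏ u ∈ U, if u < t then -1 else 1 := by
    rw [← Finset.prod_product', Finset.prod_ite, Finset.prod_const, Finset.prod_const_one, mul_one]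
  have card_eq : (-1 : ℂ) ^ (T ∩ U).card = ∏ t ∈ T, ∏ u ∈ U, if u = t then -1 else 1 := by
    simp only [Finset.prod_ite_eq', Finset.prod_ite_mem, Finset.prod_const]
  rw [pow_add, card_lt, card_eq, bladeSign, ← Finset.prod_mul_distrib]
  refine Finset.prod_congr rfl fun t _ => ?_
  rw [← Finset.prod_mul_distrib]
  refine Finset.prod_congr rfl fun u _ => ?_
  rcases lt_trichotomy u t with h | h | h
  · simp [h, h.le, h.ne]
  · simp [h]
  · simp [h.not_gt, h.not_ge, h.ne']

theorem prod_symmDiff_of_mul_self {ι M : Type*} [DecidableEq ι] [CommMonoid M] {f : ι → M}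
    (hf : ∀ i, f i * f i = 1) (S T : Finset ι) :
    ∏ i ∈ symmDiff S T, f i = (∏ i ∈ S, f i) * ∏ i ∈ T, f i := by
  have cancel_inter : (∏ i ∈ S ∩ T, f i) * ∏ i ∈ S ∩ T, f i = 1 := by
    rw [← Finset.prod_mul_distrib, Finset.prod_congr rfl fun i _ => hf i, Finset.prod_const_one]
  calc ∏ i ∈ symmDiff S T, f i
      = (∏ i ∈ S \ T, f i) * ∏ i ∈ T \ S, f i :=
        Finset.prod_union disjoint_sdiff_sdiff
    _ = ((∏ i ∈ S ∩ T, f i) * ∏ i ∈ S ∩ T, f i)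
          * ((∏ i ∈ S \ T, f i) * ∏ i ∈ T \ S, f i) := by rw [cancel_inter, one_mul]
    _ = (∏ i ∈ S, f i) * ∏ i ∈ T, f i := by
        rw [mul_mul_mul_comm, Finset.prod_inter_mul_prod_sdiff, Finset.inter_comm,
          Finset.prod_inter_mul_prod_sdiff]

theorem bladeSign_mul_self (T U : Finset (Fin m)) : bladeSign T U * bladeSign T U = 1 := by
  simp only [bladeSign, ← Finset.prod_mul_distrib]
  exact Finset.prod_eq_one fun t _ => Finset.prod_eq_one fun u _ => by split_ifs <;> norm_num

theorem bladeSign_bot_left (U : Finset (Fin m)) : bladeSign ⊥ U = 1 := Finset.prod_empty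

theorem bladeSign_bot_right (T : Finset (Fin m)) : bladeSign T ⊥ = 1 := by simp [bladeSign]

theorem bladeSign_singleton (i j : Fin m) : bladeSign {i} {j} = if j ≤ i then -1 else 1 := by
  simp [bladeSign]

theorem bladeSign_symmDiff_left (T T' U : Finset (Fin m)) :
    bladeSign (symmDiff T T') U = bladeSign T U * bladeSign T' U :=
  prod_symmDiff_of_mul_self (fun t => by simpa [bladeSign] using bladeSign_mul_self {t} U) T T'

theorem bladeSign_symmDiff_right (T U U' : Finset (Fin m)) :
    bladeSign T (symmDiff U U') = bladeSign T U * bladeSign T U' := by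
  rw [bladeSign, bladeSign, bladeSign, ← Finset.prod_mul_distrib]
  exact Finset.prod_congr rfl fun t _ =>
    prod_symmDiff_of_mul_self (fun u => by split_ifs <;> norm_num) U U'

theorem coeff_mul (a b : Cl m) (S : Finset (Fin m)) :
    coeff (a * b) S = ∑ T, bladeSign T (symmDiff T S) * coeff a T * coeff b (symmDiff T S) := by
  simp only [← neg_one_pow_eq_bladeSign]
  rfl

theorem coeff_one (S : Finset (Fin m)) : coeff (1 : Cl m) S = if S = ∅ then 1 else 0 := rfl

theorem coeff_add (a b : Cl m) (S : Finset (Fin m)) :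
    coeff (a + b) S = coeff a S + coeff b S := rfl

theorem coeff_zero (S : Finset (Fin m)) : coeff (0 : Cl m) S = 0 := rfl

theorem coeff_real_smul (c : ℝ) (a : Cl m) (S : Finset (Fin m)) :
    coeff (c • a) S = c * coeff a S := Complex.real_smul

theorem coeff_complex_smul (c : ℂ) (a : Cl m) (S : Finset (Fin m)) :
    coeff (c • a) S = c * coeff a S := rfl

theorem ext_coeff {a b : Cl m} (h : ∀ S, coeff a S = coeff b S) : a = b := funext h

theorem coeff_mul_assoc_right (a b c : Cl m) (S : Finset (Fin m)) :
    coeff (a * (b * c)) S = ∑ T, ∑ U,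
      bladeSign T U * bladeSign T (symmDiff U (symmDiff T S))
        * bladeSign U (symmDiff U (symmDiff T S))
        * coeff a T * coeff b U * coeff c (symmDiff U (symmDiff T S)) := by
  simp only [coeff_mul, Finset.mul_sum]
  refine Finset.sum_congr rfl fun T _ => Finset.sum_congr rfl fun U _ => ?_
  have sign_eq : bladeSign T (symmDiff T S)
      = bladeSign T U * bladeSign T (symmDiff U (symmDiff T S)) := by
    rw [← bladeSign_symmDiff_right, symmDiff_symmDiff_cancel_left]
  rw [sign_eq]
  ring

theorem coeff_mul_assoc_left (a b c : Cl m) (S : Finset (Fin m)) :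
    coeff (a * b * c) S = ∑ T, ∑ U,
      bladeSign T U * bladeSign T (symmDiff U (symmDiff T S))
        * bladeSign U (symmDiff U (symmDiff T S))
        * coeff a T * coeff b U * coeff c (symmDiff U (symmDiff T S)) := by
  simp only [coeff_mul, Finset.mul_sum, Finset.sum_mul]
  rw [Finset.sum_comm]
  refine Finset.sum_congr rfl fun T _ => ?_
  rw [← Equiv.sum_comp (symmDiff_right_involutive T).toPerm]
  refine Finset.sum_congr rfl fun U _ => ?_
  have shift : symmDiff (symmDiff T U) S = symmDiff U (symmDiff T S) := by
    rw [symmDiff_comm T, symmDiff_assoc]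
  simp only [Function.Involutive.coe_toPerm, symmDiff_symmDiff_cancel_left, shift,
    bladeSign_symmDiff_left]
  ring

-- Local: a global instance would be a second route to the additive structure of the normed group.
local instance : Ring (Cl m) where
  __ := (inferInstance : AddCommGroup (Cl m))
  __ := (inferInstance : Mul (Cl m))
  __ := (inferInstance : One (Cl m))
  left_distrib a b c := ext_coeff fun S => by
    simp only [coeff_mul, coeff_add, ← Finset.sum_add_distrib, mul_add]
  right_distrib a b c := ext_coeff fun S => by
    simp only [coeff_mul, coeff_add, ← Finset.sum_add_distrib, mul_add, add_mul]
  zero_mul a := ext_coeff fun S => by simp [coeff_mul, coeff_zero]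
  mul_zero a := ext_coeff fun S => by simp [coeff_mul, coeff_zero]
  mul_assoc a b c := ext_coeff fun S => by rw [coeff_mul_assoc_right, coeff_mul_assoc_left]
  one_mul a := ext_coeff fun S => by
    simp [coeff_mul, coeff_one, bladeSign_bot_left, ← Finset.bot_eq_empty]
  mul_one a := ext_coeff fun S => by
    simp [coeff_mul, coeff_one, bladeSign_bot_right, ← Finset.bot_eq_empty, symmDiff_eq_bot]

local instance : Algebra ℝ (Cl m) :=
  Algebra.ofModule
    (fun c a b => ext_coeff fun S => by
      simp only [coeff_mul, coeff_real_smul, Finset.mul_sum]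
      exact Finset.sum_congr rfl fun T _ => by ring)
    (fun c a b => ext_coeff fun S => by
      simp only [coeff_mul, coeff_real_smul, Finset.mul_sum]
      exact Finset.sum_congr rfl fun T _ => by ring)

theorem complex_ofReal_smul (c : ℝ) (a : Cl m) : (c : ℂ) • a = c • a :=
  ext_coeff fun S => by rw [coeff_complex_smul, coeff_real_smul]

theorem coeff_e (i : Fin m) (S : Finset (Fin m)) :
    coeff (e m i) S = if S = {i} then 1 else 0 := rfl

theorem coeff_e_mul_e (i j : Fin m) (S : Finset (Fin m)) :
    coeff (e m i * e m j) S
      = (if j ≤ i then -1 else 1) * if S = symmDiff {i} {j} then 1 else 0 := by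
  have solve : symmDiff {i} S = {j} ↔ S = symmDiff {i} {j} := by
    rw [← symmDiff_right_inj (a := {i}), symmDiff_symmDiff_cancel_left]
  rw [coeff_mul, Finset.sum_eq_single {i} (fun T _ hT => by simp [coeff_e, hT]) (by simp)]
  by_cases hS : S = symmDiff {i} {j}
  · simp [coeff_e, hS, symmDiff_symmDiff_cancel_left, bladeSign_singleton]
  · simp [coeff_e, solve, hS]

theorem e_mul_e_add_e_mul_e (i j : Fin m) :
    e m i * e m j + e m j * e m i = (if i = j then (-2 : ℝ) else 0) • (1 : Cl m) := by
  refine ext_coeff fun S => ?_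
  rw [coeff_add, coeff_e_mul_e, coeff_e_mul_e, symmDiff_comm ({j} : Finset (Fin m)),
    coeff_real_smul, coeff_one]
  rcases lt_trichotomy i j with h | rfl | h
  · rw [if_neg h.not_ge, if_pos h.le, if_neg h.ne]
    push_cast
    ring
  · rw [if_pos le_rfl, if_pos rfl, symmDiff_self, Finset.bot_eq_empty]
    push_cast
    ring
  · rw [if_pos h.le, if_neg h.not_ge, if_neg h.ne']
    push_cast
    ring

/-! ### Vectors and bivectors -/

theorem vec_eq_sum (x : Fin m → ℝ) : vec m x = ∑ i, x i • e m i := by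
  simp only [vec, complex_ofReal_smul]

theorem vec_add (x y : Fin m → ℝ) : vec m (x + y) = vec m x + vec m y := by
  simp only [vec_eq_sum, Pi.add_apply, add_smul, Finset.sum_add_distrib]

theorem vec_smul (c : ℝ) (x : Fin m → ℝ) : vec m (c • x) = c • vec m x := by
  simp only [vec_eq_sum, Pi.smul_apply, smul_eq_mul, mul_smul, Finset.smul_sum]

theorem vec_single (i : Fin m) : vec m (Pi.single i 1) = e m i := by
  simp [vec_eq_sum, Pi.single_apply]

theorem vec_mul_vec_eq_sum (x y : Fin m → ℝ) :
    vec m x * vec m y = ∑ i, ∑ j, (x i * y j) • (e m i * e m j) := by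
  simp only [vec_eq_sum, Finset.sum_mul_sum, smul_mul_smul_comm]

theorem ip_eq_dotProduct (x y : Fin m → ℝ) : ip x y = x ⬝ᵥ y := rfl

theorem vec_mul_vec_add_vec_mul_vec (x y : Fin m → ℝ) :
    vec m x * vec m y + vec m y * vec m x = (-2 * ip x y) • (1 : Cl m) := by
  have swapped : vec m y * vec m x = ∑ i, ∑ j, (x i * y j) • (e m j * e m i) := by
    rw [vec_mul_vec_eq_sum, Finset.sum_comm]
    simp only [mul_comm (y _)]
  rw [vec_mul_vec_eq_sum, swapped]
  simp only [← Finset.sum_add_distrib, ← smul_add, e_mul_e_add_e_mul_e]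
  simp [ip, Finset.mul_sum, Finset.sum_smul, smul_smul, mul_comm]

theorem vec_mul_self (x : Fin m → ℝ) : vec m x * vec m x = -ip x x • (1 : Cl m) := by
  linear_combination (norm := module) (1 / 2 : ℝ) • vec_mul_vec_add_vec_mul_vec x x

theorem sum_sum_eq_two_nsmul_sum_lt {ι M : Type*} [Fintype ι] [LinearOrder ι] [AddCommMonoid M]
    {f : ι → ι → M} (hsymm : ∀ i j, f i j = f j i) (hdiag : ∀ i, f i i = 0) :
    ∑ i, ∑ j, f i j = 2 • ∑ i, ∑ j, if i < j then f i j else 0 := by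
  have hswap : ∑ i, ∑ j, (if i < j then f i j else 0) = ∑ i, ∑ j, if j < i then f i j else 0 := by
    rw [Finset.sum_comm]
    simp only [hsymm]
  rw [two_nsmul]
  nth_rw 2 [hswap]
  simp only [← Finset.sum_add_distrib]
  refine Finset.sum_congr rfl fun i _ => Finset.sum_congr rfl fun j _ => ?_
  rcases lt_trichotomy i j with h | rfl | h
  · simp [h, h.not_gt]
  · simp [hdiag]
  · simp [h, h.not_gt]

theorem two_smul_wedge (x y : Fin m → ℝ) :
    (2 : ℝ) • wedge m x y = vec m x * vec m y - vec m y * vec m x := by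
  have hsymm (i j : Fin m) : (x i * y j - x j * y i) • (e m i * e m j)
      = (x j * y i - x i * y j) • (e m j * e m i) := by
    rcases eq_or_ne i j with rfl | hij
    · simp
    · have anticomm := e_mul_e_add_e_mul_e i j
      rw [if_neg hij, zero_smul] at anticomm
      rw [eq_neg_of_add_eq_zero_left anticomm]
      module
  simp only [wedge, complex_ofReal_smul]
  rw [ofNat_smul_eq_nsmul ℝ, ← sum_sum_eq_two_nsmul_sum_lt hsymm (by simp), vec_mul_vec_eq_sum x y,
    vec_mul_vec_eq_sum y x]
  simp only [sub_smul, Finset.sum_sub_distrib, mul_comm (y _)]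

theorem wedge_eq_vec_mul_vec_add (x y : Fin m → ℝ) :
    wedge m x y = vec m x * vec m y + ip x y • (1 : Cl m) := by
  linear_combination (norm := module) (1 / 2 : ℝ) • two_smul_wedge x y
    - (1 / 2 : ℝ) • vec_mul_vec_add_vec_mul_vec x y

theorem left_vec_mul_wedge (x y : Fin m → ℝ) :
    vec m x * wedge m x y = ip x y • vec m x - ip x x • vec m y := by
  rw [wedge_eq_vec_mul_vec_add, mul_add, ← mul_assoc, vec_mul_self]
  simp only [smul_mul_assoc, mul_smul_comm, one_mul, mul_one]
  module

theorem wedge_eq_neg_vec_mul_vec_sub (x y : Fin m → ℝ) :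
    wedge m x y = -(vec m y * vec m x) - ip x y • (1 : Cl m) := by
  linear_combination (norm := module) (1 / 2 : ℝ) • two_smul_wedge x y
    + (1 / 2 : ℝ) • vec_mul_vec_add_vec_mul_vec x y

theorem right_vec_mul_wedge (x y : Fin m → ℝ) :
    vec m y * wedge m x y = ip y y • vec m x - ip x y • vec m y := by
  rw [wedge_eq_neg_vec_mul_vec_sub, mul_sub, mul_neg, ← mul_assoc, vec_mul_self]
  simp only [smul_mul_assoc, mul_smul_comm, one_mul, mul_one]
  module

/-! ### Homogenised Gegenbauer polynomials -/

/-- The homogenised Gegenbauer polynomials: `gegHom l k s r` is the coefficient of `t ^ k` in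
`t * (1 - 2 * s * t + r * t ^ 2) ^ (-l)`. The factor `t` shifts the index, so that
`gegHom l (k + 1)` is the homogenisation of `geg l k`, and `gegHom l 0 = 0` plays the role
of `C_{-1}`. -/
def gegHom (l : ℝ) : ℕ → ℝ → ℝ → ℝ
  | 0, _, _ => 0
  | 1, _, _ => 1
  | k + 2, s, r => (2 * (k + l) * s * gegHom l (k + 1) s r
      - (k - 1 + 2 * l) * r * gegHom l k s r) / (k + 1)

theorem gegHom_add_two (l s r : ℝ) (k : ℕ) :
    (k + 1) * gegHom l (k + 2) s r
      = 2 * (k + l) * s * gegHom l (k + 1) s r - (k - 1 + 2 * l) * r * gegHom l k s r := by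
  rw [gegHom, mul_div_cancel₀ _ (by positivity)]

theorem natCast_mul_gegHom_succ (l s r : ℝ) (k : ℕ) :
    k * gegHom l (k + 1) s r
      = 2 * (k - 1 + l) * s * gegHom l k s r - (k - 2 + 2 * l) * r * gegHom l (k - 1) s r := by
  cases k with
  | zero => simp [gegHom]
  | succ k =>
    push_cast
    linear_combination gegHom_add_two l s r k

theorem gegHom_mul_sq (l ρ w : ℝ) (k : ℕ) :
    gegHom l (k + 1) (ρ * w) (ρ ^ 2) = ρ ^ k * geg l k w := by
  induction k using Nat.twoStepInduction with
  | zero => simp [gegHom, geg]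
  | one =>
    simp only [gegHom, geg]
    push_cast
    ring
  | more k ih₀ ih₁ =>
    rw [gegHom, ih₀, ih₁, geg]
    push_cast
    ring

theorem gegHom_contiguous_pair (l s r : ℝ) (k : ℕ) :
    (k + 1) * gegHom l (k + 2) s r
        = 2 * l * (s * gegHom (l + 1) (k + 1) s r - r * gegHom (l + 1) k s r) ∧
      (k + 2 * l) * gegHom l (k + 1) s r
        = 2 * l * (gegHom (l + 1) (k + 1) s r - s * gegHom (l + 1) k s r) := by
  induction k with
  | zero => simp [gegHom]
  | succ k ih =>
    obtain ⟨degree_eq, codegree_eq⟩ := ih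
    have codegree_succ : (k + 1 + 2 * l) * gegHom l (k + 2) s r
        = 2 * l * (gegHom (l + 1) (k + 2) s r - s * gegHom (l + 1) (k + 1) s r) := by
      apply mul_left_cancel₀ (show (k + 1 : ℝ) ≠ 0 by positivity)
      linear_combination (k + 1 + 2 * l) * degree_eq - 2 * l * gegHom_add_two (l + 1) s r k
    push_cast
    refine ⟨?_, codegree_succ⟩
    have recurrence := gegHom_add_two l s r (k + 1)
    push_cast at recurrence
    linear_combination recurrence + s * degree_eq + s * codegree_succ - r * codegree_eq

theorem degree_mul_gegHom (l s r : ℝ) (k : ℕ) :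
    k * gegHom l (k + 1) s r
      = 2 * l * (s * gegHom (l + 1) k s r - r * gegHom (l + 1) (k - 1) s r) := by
  cases k with
  | zero => simp [gegHom]
  | succ k => exact_mod_cast (gegHom_contiguous_pair l s r k).1

theorem degree_add_mul_gegHom (l s r : ℝ) (k : ℕ) :
    (k - 1 + 2 * l) * gegHom l k s r
      = 2 * l * (gegHom (l + 1) k s r - s * gegHom (l + 1) (k - 1) s r) := by
  cases k with
  | zero => simp [gegHom]
  | succ k => simpa using (gegHom_contiguous_pair l s r k).2

theorem hasFDerivAt_gegHom {E : Type*} [NormedAddCommGroup E] [NormedSpace ℝ E] (l : ℝ)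
    {s r : E → ℝ} {s' r' : E →L[ℝ] ℝ} {y : E}
    (hs : HasFDerivAt s s' y) (hr : HasFDerivAt r r' y) (k : ℕ) :
    HasFDerivAt (fun v => gegHom l (k + 1) (s v) (r v))
      ((2 * l * gegHom (l + 1) k (s y) (r y)) • s'
        - (l * gegHom (l + 1) (k - 1) (s y) (r y)) • r') y := by
  induction k using Nat.twoStepInduction with
  | zero => simpa [gegHom] using hasFDerivAt_const (1 : ℝ) y
  | one => simpa [gegHom] using hs.const_mul (2 * l)
  | more k ih₀ ih₁ =>
    have hrec := (((hs.const_mul (2 * (k + 1 + l))).mul ih₁).sub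
      ((hr.const_mul (k + 2 * l)).mul ih₀)).const_mul (k + 2 : ℝ)⁻¹
    refine (hrec.congr_fderiv ?_).congr_of_eventuallyEq (.of_forall fun v => ?_)
    · have degree_eq := degree_mul_gegHom l (s y) (r y) (k + 1)
      have degree_add_eq := degree_add_mul_gegHom l (s y) (r y) (k + 2)
      have degree_add_eq' := degree_add_mul_gegHom l (s y) (r y) (k + 1)
      simp only [Nat.add_sub_cancel, show k + 2 - 1 = k + 1 by rfl, Nat.cast_add, Nat.cast_one,
        Nat.cast_ofNat] at degree_eq degree_add_eq degree_add_eq' ⊢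
      match_scalars
      · rw [inv_mul_eq_iff_eq_mul₀ (by positivity)]
        linear_combination degree_eq + degree_add_eq - 2 * l * gegHom_add_two (l + 1) (s y) (r y) k
      · rw [inv_mul_eq_iff_eq_mul₀ (by positivity)]
        linear_combination l * natCast_mul_gegHom_succ (l + 1) (s y) (r y) k - degree_add_eq'
    · simp only [gegHom, Pi.sub_apply, Pi.mul_apply]
      push_cast
      ring

/-! ### The Dirac operator -/

/-- The functional `v ↦ ⟨a, v⟩`. A derivative `HasFDerivAt g (ipL a) y` says that `g` has gradient
`a` at `y`; `HasGradientAt` is not available since `Fin m → ℝ` carries the sup norm. -/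
def ipL : (Fin m → ℝ) →ₗ[ℝ] (Fin m → ℝ) →L[ℝ] ℝ :=
  LinearMap.toContinuousLinearMap.toLinearMap ∘ₗ dotProductBilin ℝ ℝ

theorem ipL_apply (x y : Fin m → ℝ) : ipL x y = ip x y := rfl

theorem ipL_single (x : Fin m → ℝ) (i : Fin m) : ipL x (Pi.single i 1) = x i :=
  dotProduct_single_one x i

theorem hasFDerivAt_ip_right (x y : Fin m → ℝ) : HasFDerivAt (ip x) (ipL x) y :=
  (ipL x).hasFDerivAt

theorem hasFDerivAt_ip_self (y : Fin m → ℝ) :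
    HasFDerivAt (fun v => ip v v) (ipL ((2 : ℝ) • y)) y := by
  have hcoord (i : Fin m) : HasFDerivAt (fun v : Fin m → ℝ => v i)
      (ContinuousLinearMap.proj (R := ℝ) (φ := fun _ => ℝ) i) y := hasFDerivAt_apply i y
  have hsum := HasFDerivAt.fun_sum fun i (_ : i ∈ Finset.univ) => (hcoord i).mul (hcoord i)
  refine hsum.congr_fderiv (ContinuousLinearMap.ext fun v => ?_)
  simp [ipL_apply, ip, two_mul, Finset.sum_add_distrib]

theorem dirac_eq_sum {f : (Fin m → ℝ) → Cl m} {f' : (Fin m → ℝ) →L[ℝ] Cl m} {y : Fin m → ℝ}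
    (hf : HasFDerivAt f f' y) : dirac f y = ∑ i, e m i * f' (Pi.single i 1) := by
  simp only [dirac, pder, hf.fderiv]

theorem dirac_sub {f g : (Fin m → ℝ) → Cl m} {y : Fin m → ℝ}
    (hf : DifferentiableAt ℝ f y) (hg : DifferentiableAt ℝ g y) :
    dirac (fun v => f v - g v) y = dirac f y - dirac g y := by
  simp only [dirac, pder, fderiv_fun_sub hf hg, _root_.sub_apply, mul_sub,
    Finset.sum_sub_distrib]

theorem dirac_const_smul {f : (Fin m → ℝ) → Cl m} {y : Fin m → ℝ} (hf : DifferentiableAt ℝ f y)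
    (c : ℝ) : dirac (fun v => c • f v) y = c • dirac f y := by
  simp only [dirac, pder, fderiv_fun_const_smul hf, _root_.smul_apply, mul_smul_comm,
    Finset.smul_sum]

theorem dirac_smul {g : (Fin m → ℝ) → ℝ} {f : (Fin m → ℝ) → Cl m} {a y : Fin m → ℝ}
    (hg : HasFDerivAt g (ipL a) y) (hf : DifferentiableAt ℝ f y) :
    dirac (fun v => g v • f v) y = vec m a * f y + g y • dirac f y := by
  rw [dirac_eq_sum (hg.fun_smul hf.hasFDerivAt)]
  simp only [dirac, pder, _root_.add_apply, _root_.smul_apply,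
    ContinuousLinearMap.smulRight_apply, ipL_single, mul_add, mul_smul_comm,
    Finset.sum_add_distrib, vec_eq_sum, Finset.sum_mul, smul_mul_assoc, Finset.smul_sum, add_comm]

theorem dirac_smul_one {g : (Fin m → ℝ) → ℝ} {a y : Fin m → ℝ} (hg : HasFDerivAt g (ipL a) y) :
    dirac (fun v => g v • (1 : Cl m)) y = vec m a := by
  rw [dirac_smul hg (differentiableAt_const 1), mul_one]
  simp [dirac, pder]

theorem isLinearMap_wedge (x : Fin m → ℝ) : IsLinearMap ℝ (wedge m x) where
  map_add y z := by
    simp only [wedge_eq_vec_mul_vec_add, vec_add, mul_add, ip_eq_dotProduct, dotProduct_add]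
    module
  map_smul c y := by
    simp only [wedge_eq_vec_mul_vec_add, vec_smul, mul_smul_comm, ip_eq_dotProduct, dotProduct_smul]
    module

theorem hasFDerivAt_wedge (x y : Fin m → ℝ) :
    HasFDerivAt (wedge m x) (isLinearMap_wedge x).mk'.toContinuousLinearMap y :=
  (isLinearMap_wedge x).mk'.toContinuousLinearMap.hasFDerivAt

theorem dirac_wedge (x y : Fin m → ℝ) : dirac (wedge m x) y = ((m : ℝ) - 1) • vec m x := by
  have e_mul_wedge (i : Fin m) : e m i * wedge m x (Pi.single i 1) = vec m x - x i • e m i := by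
    rw [← vec_single, right_vec_mul_wedge]
    simp [ip_eq_dotProduct]
  rw [dirac_eq_sum (hasFDerivAt_wedge x y)]
  simp only [LinearMap.coe_toContinuousLinearMap', IsLinearMap.mk'_apply, e_mul_wedge,
    Finset.sum_sub_distrib, ← vec_eq_sum, Finset.sum_const, Finset.card_univ, Fintype.card_fin]
  module

/-! ### Zonal harmonics -/

/-- For `k = n + 1` this is `(|x||y|)^n C_n^l(⟨ξ,η⟩)`, written as a polynomial in `⟨x,y⟩` and
`|x|²|y|²`. -/
def zonal (l : ℝ) (k : ℕ) (x y : Fin m → ℝ) : ℝ := gegHom l k (ip x y) (ip x x * ip y y)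

theorem nrm_sq (x : Fin m → ℝ) : nrm x ^ 2 = ip x x :=
  Real.sq_sqrt (Finset.sum_nonneg fun i _ => mul_self_nonneg (x i))

theorem eq_zero_of_nrm_eq_zero {x : Fin m → ℝ} (hx : nrm x = 0) : x = 0 := by
  rw [← dotProduct_self_eq_zero, ← ip_eq_dotProduct, ← nrm_sq, hx, zero_pow two_ne_zero]

theorem pow_mul_geg_eq_zonal (l : ℝ) (k : ℕ) (x y : Fin m → ℝ) :
    (nrm x * nrm y) ^ k * geg l k (ip x y / (nrm x * nrm y)) = zonal l (k + 1) x y := by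
  have hip : nrm x * nrm y * (ip x y / (nrm x * nrm y)) = ip x y := by
    refine mul_div_cancel_of_imp' fun h => ?_
    rcases mul_eq_zero.mp h with h | h <;>
      simp [ip_eq_dotProduct, eq_zero_of_nrm_eq_zero h]
  rw [← gegHom_mul_sq, hip, mul_pow, nrm_sq, nrm_sq, zonal]

theorem degree_mul_zonal (l : ℝ) (k : ℕ) (x y : Fin m → ℝ) :
    k * zonal l (k + 1) x y
      = 2 * l * (ip x y * zonal (l + 1) k x y
          - ip x x * ip y y * zonal (l + 1) (k - 1) x y) :=
  degree_mul_gegHom l (ip x y) (ip x x * ip y y) k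

theorem degree_add_mul_zonal (l : ℝ) (k : ℕ) (x y : Fin m → ℝ) :
    (k - 1 + 2 * l) * zonal l k x y
      = 2 * l * (zonal (l + 1) k x y - ip x y * zonal (l + 1) (k - 1) x y) :=
  degree_add_mul_gegHom l (ip x y) (ip x x * ip y y) k

theorem hasFDerivAt_zonal (l : ℝ) (k : ℕ) (x y : Fin m → ℝ) :
    HasFDerivAt (zonal l (k + 1) x)
      (ipL ((2 * l * zonal (l + 1) k x y) • x - (2 * l * ip x x * zonal (l + 1) (k - 1) x y) • y))
      y := by
  refine (hasFDerivAt_gegHom l (hasFDerivAt_ip_right x y)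
    ((hasFDerivAt_ip_self y).const_mul (ip x x)) k).congr_fderiv ?_
  simp only [map_sub, map_smul, zonal]
  module

theorem vec_mul_dirac_zonal (l : ℝ) (k : ℕ) (x y : Fin m → ℝ) :
    vec m y * dirac (fun v => zonal l (k + 1) x v • (1 : Cl m)) y
      = -(k * zonal l (k + 1) x y) • (1 : Cl m) - (2 * l * zonal (l + 1) k x y) • wedge m x y := by
  have degree_eq := degree_mul_zonal l k x y
  rw [dirac_smul_one (hasFDerivAt_zonal l k x y), wedge_eq_neg_vec_mul_vec_sub, sub_eq_add_neg,
    vec_add, ← neg_smul, vec_smul, vec_smul, mul_add, mul_smul_comm, mul_smul_comm, vec_mul_self]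
  match_scalars
  · ring
  · linear_combination degree_eq

theorem dirac_zonal_sub_zonal_wedge_eq_zero {l a b : ℝ} {k : ℕ} (hl : (m : ℝ) = 2 * l + 2)
    (hab : 2 * l * a = (k + 1 + 2 * l) * b) (x y : Fin m → ℝ) :
    dirac (fun v => (a * zonal l (k + 2) x v) • (1 : Cl m)
      - (b * zonal (l + 1) (k + 1) x v) • wedge m x v) y = 0 := by
  have degree_eq := degree_mul_zonal (l + 1) k x y
  have degree_add_eq := degree_add_mul_zonal (l + 1) k x y
  have hH := hasFDerivAt_zonal l (k + 1) x y
  have hQ := hasFDerivAt_zonal (l + 1) k x y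
  have hW := (hasFDerivAt_wedge x y).differentiableAt
  have hH_one := hH.differentiableAt.smul_const (1 : Cl m)
  have hQW := hQ.differentiableAt.fun_smul hW
  simp only [mul_smul]
  rw [dirac_sub (hH_one.fun_const_smul _) (hQW.fun_const_smul _), dirac_const_smul hH_one,
    dirac_const_smul hQW, dirac_smul_one hH, dirac_smul hQ hW, dirac_wedge, hl]
  simp only [sub_eq_add_neg _ (_ • y), ← neg_smul, vec_add, vec_smul, add_mul, smul_mul_assoc,
    left_vec_mul_wedge, right_vec_mul_wedge, Nat.add_sub_cancel]
  match_scalars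
  · linear_combination zonal (l + 1) (k + 1) x y * hab + b * degree_eq
  · linear_combination (-ip x x * zonal (l + 1) k x y) * hab - b * ip x x * degree_add_eq

end Development

/-- For `λ = (m-2)/2` and the harmonic polynomial `H_k(y) = (|x||y|)^k C_k^λ(⟨ξ,η⟩)`
(`ξ = x/|x|`, `η = y/|y|`), one has
`y ∂_y H_k = -k (|x||y|)^k C_k^λ(⟨ξ,η⟩) - 2λ (|x||y|)^{k-1} (x∧y) C_{k-1}^{λ+1}(⟨ξ,η⟩)`;
consequently the component `F_k` of the monogenic decomposition `H_k = F_k + G_k`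
satisfies `∂_y F_k = 0`. -/
theorem monogenic_decomposition (m : ℕ) (hm : 3 ≤ m) (k : ℕ) (hk : 1 ≤ k)
    (x : Fin m → ℝ) (hx : x ≠ 0) :
    (∀ y : Fin m → ℝ, y ≠ 0 →
      vec m y *
        dirac (fun v =>
          (((nrm x * nrm v)^k * geg (((m:ℝ) - 2)/2) k (ip x v / (nrm x * nrm v)) : ℝ)) •
            (1 : Cl m)) y
        = (-(k : ℝ) * (nrm x * nrm y)^k * geg (((m:ℝ) - 2)/2) k (ip x y / (nrm x * nrm y)))
              • (1 : Cl m)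
          + (-(2 * (((m:ℝ) - 2)/2)) * (nrm x * nrm y)^(k-1)
              * geg (((m:ℝ) - 2)/2 + 1) (k-1) (ip x y / (nrm x * nrm y))) • wedge m x y) ∧
    (∀ y : Fin m → ℝ, y ≠ 0 →
      dirac (fun v =>
        ((1 - (k : ℝ)/(2*(k:ℝ) + (m:ℝ) - 2)) *
            ((nrm x * nrm v)^k * geg (((m:ℝ) - 2)/2) k (ip x v / (nrm x * nrm v)))) • (1 : Cl m)
        - ((2 * (((m:ℝ) - 2)/2) / (2*(k:ℝ) + (m:ℝ) - 2)) *
            ((nrm x * nrm v)^(k-1)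
              * geg (((m:ℝ) - 2)/2 + 1) (k-1) (ip x v / (nrm x * nrm v)))) • wedge m x v) y
      = 0) := by
  obtain ⟨n, rfl⟩ : ∃ n, k = n + 1 := ⟨k - 1, by omega⟩
  simp only [mul_assoc, pow_mul_geg_eq_zonal, Nat.add_sub_cancel]
  refine ⟨fun y _ => ?_, fun y _ => ?_⟩
  · rw [vec_mul_dirac_zonal]
    module
  · have hM : 2 * ((n + 1 : ℕ) : ℝ) + m - 2 ≠ 0 := by
      have : (3 : ℝ) ≤ m := by exact_mod_cast hm
      linarith [Nat.cast_nonneg (α := ℝ) (n + 1)]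
    refine dirac_zonal_sub_zonal_wedge_eq_zero (by ring) ?_ x y
    field_simp
    push_cast
    ring

end CliffordFourier
end
end

section
/- For λ ≥ 1 and for all z > 0 and w ∈ (−1,1), the functions A_λ, B_λ, C_λ of the series representation of the Clifford–Fourier kernel satisfy the recursions: A_{λ+1}(w,z) = −((λ+1)/λ) z^{−1} ∂_w A_λ(w,z), B_{λ+1}(w,z) = −z^{−1} ∂_w B_λ(w,z), and C_λ(w,z) = −(1/(λ z)) ∂_w A_λ(w,z). -/
open scoped BigOperators
open MeasureTheory

noncomputable section

namespace CliffordFourier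

/-- The Bessel function of the first kind
`J_a(z) = Σ_{j≥0} (-1)^j (z/2)^{2j+a} / (j! Γ(j+a+1))`. -/
def besselJ (a z : ℝ) : ℝ :=
  ∑' j : ℕ, ((-1 : ℝ)^j * (z/2) ^ (2*(j:ℝ) + a)) / (j.factorial * Real.Gamma ((j : ℝ) + a + 1))

/-- `A_λ(w,z) = 2^{λ-1} Γ(λ+1) Σ_{k≥0} (i^{2λ+2} + (-1)^k) z^{-λ} J_{k+λ}(z) C_k^λ(w)`. -/
def Afun (lam w z : ℝ) : ℂ :=
  (((2:ℝ)^(lam - 1) * Real.Gamma (lam + 1) : ℝ) : ℂ) *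
    ∑' k : ℕ, (Complex.I ^ ((2*lam + 2 : ℝ) : ℂ) + (-1 : ℂ)^k) *
      ((z ^ (-lam) * besselJ ((k : ℝ) + lam) z * geg lam k w : ℝ) : ℂ)

/-- `B_λ(w,z) = -2^{λ-1} Γ(λ) Σ_{k≥0} (k+λ)(i^{2λ+2} - (-1)^k) z^{-λ} J_{k+λ}(z) C_k^λ(w)`. -/
def Bfun (lam w z : ℝ) : ℂ :=
  -(((2:ℝ)^(lam - 1) * Real.Gamma lam : ℝ) : ℂ) *
    ∑' k : ℕ, ((k : ℂ) + (lam : ℂ)) * (Complex.I ^ ((2*lam + 2 : ℝ) : ℂ) - (-1 : ℂ)^k) *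
      ((z ^ (-lam) * besselJ ((k : ℝ) + lam) z * geg lam k w : ℝ) : ℂ)

/-- `C_λ(w,z) = -2^{λ-1} Γ(λ) Σ_{k≥0} (i^{2λ+2} + (-1)^k) z^{-λ-1} J_{k+λ}(z) (C_k^λ)'(w)`. -/
def Cfun (lam w z : ℝ) : ℂ :=
  -(((2:ℝ)^(lam - 1) * Real.Gamma lam : ℝ) : ℂ) *
    ∑' k : ℕ, (Complex.I ^ ((2*lam + 2 : ℝ) : ℂ) + (-1 : ℂ)^k) *
      ((z ^ (-lam - 1) * besselJ ((k : ℝ) + lam) z * deriv (geg lam k) w : ℝ) : ℂ)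

/-!
The series of `A_λ` and `B_λ` have the form `∑ p_k C_k^λ(w)`, where `p_k` is a coefficient of at
most exponential growth times `J_{k+λ}(z) = O((z/2)^k / k!)`. Since `C_k^λ(w)` grows at most
exponentially in `k`, locally uniformly in `w`, such series may be differentiated termwise, and
`(C_{k+1}^λ)' = 2λ C_k^{λ+1}` turns the derivative into a series of the same form for `λ + 1`,
with index shifted by one and the same Bessel functions `J_{(k+1)+λ} = J_{k+(λ+1)}`. As
`i^{2(λ+1)+2} = -i^{2λ+2}`, shifting the index in the coefficients of `A_λ` and `B_λ` gives those
of `A_{λ+1}` and `B_{λ+1}` up to sign. The series of `C_λ` is, up to a factor, already the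
differentiated series of `A_λ`.
-/

section Gegenbauer

variable (lam w : ℝ)

lemma add_two_mul_geg_add_two (k : ℕ) :
    ((k : ℝ) + 2) * geg lam (k + 2) w =
      2 * ((k : ℝ) + 1 + lam) * w * geg lam (k + 1) w - ((k : ℝ) + 2 * lam) * geg lam k w := by
  have : (k : ℝ) + 2 ≠ 0 := by positivity
  rw [geg]
  field_simp

/-- On generating functions: `(1 - 2wt + t²)^{-λ} = (1 - 2wt + t²) (1 - 2wt + t²)^{-(λ+1)}`. -/
lemma geg_add_two_eq_geg_add_one : ∀ k : ℕ,
    geg lam (k + 2) w =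
      geg (lam + 1) (k + 2) w - 2 * w * geg (lam + 1) (k + 1) w + geg (lam + 1) k w
  | 0 => by
    simp only [geg, Nat.cast_zero, zero_add, mul_one]
    ring
  | 1 => by
    simp only [geg, Nat.cast_one, Nat.cast_zero, zero_add, mul_one]
    ring
  | k + 2 => by
    have rec_lam := add_two_mul_geg_add_two lam w (k + 2)
    have rec_four := add_two_mul_geg_add_two (lam + 1) w (k + 2)
    have rec_three := add_two_mul_geg_add_two (lam + 1) w (k + 1)
    have rec_two := add_two_mul_geg_add_two (lam + 1) w k
    rw [geg_add_two_eq_geg_add_one (k + 1), geg_add_two_eq_geg_add_one k] at rec_lam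
    push_cast at rec_lam rec_four rec_three
    have : (k : ℝ) + 2 + 2 ≠ 0 := by positivity
    apply mul_left_cancel₀ this
    linear_combination rec_lam - rec_four + 2 * w * rec_three - rec_two

lemma add_mul_geg_add_two (k : ℕ) :
    ((k : ℝ) + 2 + lam) * geg lam (k + 2) w =
      lam * (geg (lam + 1) (k + 2) w - geg (lam + 1) k w) := by
  linear_combination ((k : ℝ) + 2 + lam) * geg_add_two_eq_geg_add_one lam w k
    + add_two_mul_geg_add_two (lam + 1) w k

lemma hasDerivAt_geg_zero : HasDerivAt (geg lam 0) 0 w :=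
  hasDerivAt_const w 1

lemma hasDerivAt_geg_one : HasDerivAt (geg lam 1) (2 * lam) w :=
  ((hasDerivAt_id w).const_mul (2 * lam)).congr_deriv (mul_one _)

variable {lam w} in
lemma hasDerivAt_geg_add_two {k : ℕ} {d₀ d₁ : ℝ} (h₀ : HasDerivAt (geg lam k) d₀ w)
    (h₁ : HasDerivAt (geg lam (k + 1)) d₁ w) :
    HasDerivAt (geg lam (k + 2))
      ((2 * ((k : ℝ) + 1 + lam) * (geg lam (k + 1) w + w * d₁) - ((k : ℝ) + 2 * lam) * d₀)
        / ((k : ℝ) + 2)) w := by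
  have h := ((((hasDerivAt_id w).const_mul (2 * ((k : ℝ) + 1 + lam))).mul h₁).sub
    (h₀.const_mul ((k : ℝ) + 2 * lam))).div_const ((k : ℝ) + 2)
  refine h.congr_deriv ?_
  simp only [id]
  ring

lemma hasDerivAt_geg_succ : ∀ k : ℕ,
    HasDerivAt (geg lam (k + 1)) (2 * lam * geg (lam + 1) k w) w
  | 0 => by simpa [geg] using hasDerivAt_geg_one lam w
  | 1 => by
    convert hasDerivAt_geg_add_two (hasDerivAt_geg_zero lam w) (hasDerivAt_geg_one lam w) using 1
    simp only [geg, Nat.cast_zero, zero_add, mul_zero, sub_zero]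
    ring
  | k + 2 => by
    convert hasDerivAt_geg_add_two (hasDerivAt_geg_succ k) (hasDerivAt_geg_succ (k + 1)) using 1
    have : (k : ℝ) + 1 + 2 ≠ 0 := by positivity
    push_cast
    rw [eq_div_iff this]
    linear_combination 2 * lam * add_two_mul_geg_add_two (lam + 1) w k
      - 2 * add_mul_geg_add_two lam w k

lemma deriv_geg_zero : deriv (geg lam 0) w = 0 :=
  (hasDerivAt_geg_zero lam w).deriv

lemma deriv_geg_succ (k : ℕ) : deriv (geg lam (k + 1)) w = 2 * lam * geg (lam + 1) k w :=
  (hasDerivAt_geg_succ lam w k).deriv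

lemma differentiableAt_geg : ∀ k : ℕ, DifferentiableAt ℝ (geg lam k) w
  | 0 => (hasDerivAt_geg_zero lam w).differentiableAt
  | k + 1 => (hasDerivAt_geg_succ lam w k).differentiableAt

variable {w} {r : ℝ}

lemma abs_two_mul_natCast_add_one_add_mul_le (hw : |w| ≤ r) (k : ℕ) :
    |2 * ((k : ℝ) + 1 + lam) * w| ≤ ((k : ℝ) + 2) * (4 * (1 + |lam|) * r / 2) := by
  have hadd : |(k : ℝ) + 1 + lam| ≤ ((k : ℝ) + 2) * (1 + |lam|) := by
    rw [abs_le]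
    constructor <;> nlinarith [abs_nonneg lam, le_abs_self lam, neg_abs_le lam]
  calc |2 * ((k : ℝ) + 1 + lam) * w|
    _ = 2 * |(k : ℝ) + 1 + lam| * |w| := by rw [abs_mul, abs_mul, abs_two]
    _ ≤ 2 * (((k : ℝ) + 2) * (1 + |lam|)) * r := by gcongr
    _ = ((k : ℝ) + 2) * (4 * (1 + |lam|) * r / 2) := by ring

lemma abs_natCast_add_two_mul_le (hr : 1 ≤ r) (k : ℕ) :
    |(k : ℝ) + 2 * lam| ≤ ((k : ℝ) + 2) * (4 * (1 + |lam|) * r / 2) := by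
  calc |(k : ℝ) + 2 * lam|
    _ ≤ ((k : ℝ) + 2) * (4 * (1 + |lam|) * 1 / 2) := by
      rw [abs_le]
      constructor <;> nlinarith [abs_nonneg lam, le_abs_self lam, neg_abs_le lam]
    _ ≤ ((k : ℝ) + 2) * (4 * (1 + |lam|) * r / 2) := by gcongr

lemma abs_geg_le (hr : 1 ≤ r) (hw : |w| ≤ r) : ∀ k : ℕ,
    |geg lam k w| ≤ (4 * (1 + |lam|) * r) ^ k
  | 0 => by simp [geg]
  | 1 => by
    simp only [geg, pow_one, abs_mul, abs_two]
    gcongr <;> linarith [abs_nonneg lam]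
  | k + 2 => by
    set M := 4 * (1 + |lam|) * r
    have hM_one : 1 ≤ M := by nlinarith [abs_nonneg lam]
    have hk : (0 : ℝ) < (k : ℝ) + 2 := by positivity
    rw [geg, abs_div, abs_of_pos hk, div_le_iff₀ hk]
    calc |2 * ((k : ℝ) + 1 + lam) * w * geg lam (k + 1) w - ((k : ℝ) + 2 * lam) * geg lam k w|
      _ ≤ |2 * ((k : ℝ) + 1 + lam) * w| * |geg lam (k + 1) w|
          + |(k : ℝ) + 2 * lam| * |geg lam k w| := by
        rw [← abs_mul, ← abs_mul]
        exact abs_sub _ _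
      _ ≤ ((k : ℝ) + 2) * (M / 2) * M ^ (k + 1) + ((k : ℝ) + 2) * (M / 2) * M ^ (k + 1) := by
        gcongr
        · exact abs_two_mul_natCast_add_one_add_mul_le lam hw k
        · exact abs_geg_le hr hw (k + 1)
        · exact abs_natCast_add_two_mul_le lam hr k
        · exact (abs_geg_le hr hw k).trans (pow_le_pow_right₀ hM_one k.le_succ)
      _ = M ^ (k + 2) * ((k : ℝ) + 2) := by ring

lemma abs_deriv_geg_le (hr : 1 ≤ r) (hw : |w| ≤ r) : ∀ k : ℕ,
    |deriv (geg lam k) w| ≤ 2 * |lam| * (4 * (1 + |lam + 1|) * r) ^ k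
  | 0 => by
    rw [deriv_geg_zero, abs_zero]
    positivity
  | k + 1 => by
    have hM : 1 ≤ 4 * (1 + |lam + 1|) * r := by nlinarith [abs_nonneg (lam + 1)]
    rw [deriv_geg_succ, abs_mul, abs_mul, abs_two]
    gcongr
    exact (abs_geg_le (lam + 1) hr hw k).trans (pow_le_pow_right₀ hM k.le_succ)

end Gegenbauer

section Bessel

variable {a lam z : ℝ}

lemma factorial_mul_Gamma_add_one_le (ha : 0 ≤ a) (k : ℕ) :
    (k.factorial : ℝ) * Real.Gamma (a + 1) ≤ Real.Gamma ((k : ℝ) + a + 1) := by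
  induction k with
  | zero => simp
  | succ k ih =>
    have hpos : 0 < (k : ℝ) + a + 1 := by positivity
    calc ((k + 1).factorial : ℝ) * Real.Gamma (a + 1)
      _ = ((k : ℝ) + 1) * (k.factorial * Real.Gamma (a + 1)) := by
        rw [Nat.factorial_succ]
        push_cast
        ring
      _ ≤ ((k : ℝ) + a + 1) * Real.Gamma ((k : ℝ) + a + 1) := by
        gcongr
        linarith
      _ = Real.Gamma (((k + 1 : ℕ) : ℝ) + a + 1) := by
        rw [← Real.Gamma_add_one hpos.ne']
        push_cast
        ring_nf

lemma norm_besselJ_term_le (ha : 0 ≤ a) (hz : 0 ≤ z) (j : ℕ) :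
    ‖((-1 : ℝ) ^ j * (z / 2) ^ (2 * (j : ℝ) + a)) /
        (j.factorial * Real.Gamma ((j : ℝ) + a + 1))‖ ≤
      (z / 2) ^ a / Real.Gamma (a + 1) * (((z / 2) ^ 2) ^ j / j.factorial) := by
  have hz2 : 0 ≤ z / 2 := by positivity
  have hΓ : 0 < Real.Gamma (a + 1) := Real.Gamma_pos_of_pos (by positivity)
  have hΓ_le : Real.Gamma (a + 1) ≤ Real.Gamma ((j : ℝ) + a + 1) :=
    (le_mul_of_one_le_left hΓ.le (mod_cast j.factorial_pos)).trans
      (factorial_mul_Gamma_add_one_le ha j)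
  have hpow : (z / 2) ^ (2 * (j : ℝ) + a) = ((z / 2) ^ 2) ^ j * (z / 2) ^ a := by
    rw [Real.rpow_add_of_nonneg hz2 (by positivity) ha, Real.rpow_mul hz2]
    norm_cast
  rw [norm_div, norm_mul, norm_pow, norm_neg, norm_one, one_pow, one_mul, hpow,
    Real.norm_of_nonneg (by positivity),
    Real.norm_of_nonneg (mul_nonneg (by positivity) (hΓ.le.trans hΓ_le))]
  calc ((z / 2) ^ 2) ^ j * (z / 2) ^ a / (j.factorial * Real.Gamma ((j : ℝ) + a + 1))
    _ ≤ ((z / 2) ^ 2) ^ j * (z / 2) ^ a / (j.factorial * Real.Gamma (a + 1)) := by gcongr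
    _ = (z / 2) ^ a / Real.Gamma (a + 1) * (((z / 2) ^ 2) ^ j / j.factorial) := by
      field_simp

lemma abs_besselJ_le (ha : 0 ≤ a) (hz : 0 ≤ z) :
    |besselJ a z| ≤ (z / 2) ^ a / Real.Gamma (a + 1) * Real.exp ((z / 2) ^ 2) := by
  have hexp : HasSum (fun j : ℕ ↦ ((z / 2) ^ 2) ^ j / (j.factorial : ℝ))
      (Real.exp ((z / 2) ^ 2)) := by
    rw [Real.exp_eq_exp_ℝ]
    exact NormedSpace.expSeries_div_hasSum_exp _
  exact tsum_of_norm_bounded (hexp.mul_left _) (norm_besselJ_term_le ha hz)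

lemma abs_besselJ_nat_add_le (hlam : 0 ≤ lam) (hz : 0 ≤ z) (k : ℕ) :
    |besselJ ((k : ℝ) + lam) z| ≤
      (z / 2) ^ lam / Real.Gamma (lam + 1) * Real.exp ((z / 2) ^ 2) *
        ((z / 2) ^ k / k.factorial) := by
  have hz2 : 0 ≤ z / 2 := by positivity
  have : 0 < Real.Gamma (lam + 1) := Real.Gamma_pos_of_pos (by positivity)
  calc |besselJ ((k : ℝ) + lam) z|
    _ ≤ (z / 2) ^ ((k : ℝ) + lam) / Real.Gamma ((k : ℝ) + lam + 1) * Real.exp ((z / 2) ^ 2) :=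
      abs_besselJ_le (by positivity) hz
    _ ≤ (z / 2) ^ ((k : ℝ) + lam) / (k.factorial * Real.Gamma (lam + 1)) *
        Real.exp ((z / 2) ^ 2) := by
      gcongr
      exact factorial_mul_Gamma_add_one_le hlam k
    _ = (z / 2) ^ lam / Real.Gamma (lam + 1) * Real.exp ((z / 2) ^ 2) *
        ((z / 2) ^ k / k.factorial) := by
      rw [Real.rpow_add_of_nonneg hz2 (by positivity) hlam, Real.rpow_natCast]
      field_simp

/-- The coefficients `c_k J_{k+λ}(z)` of the Gegenbauer series of `A_λ` and `B_λ`. -/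
def besselCoeff (c : ℕ → ℂ) (lam z : ℝ) (k : ℕ) : ℂ :=
  c k * (besselJ ((k : ℝ) + lam) z : ℂ)

lemma summable_norm_besselCoeff_mul_pow {c : ℕ → ℂ} {K R : ℝ} (hc : ∀ k, ‖c k‖ ≤ K * R ^ k)
    (hlam : 0 ≤ lam) (hz : 0 ≤ z) (M : ℝ) :
    Summable fun k ↦ ‖besselCoeff c lam z k‖ * M ^ k := by
  set D := (z / 2) ^ lam / Real.Gamma (lam + 1) * Real.exp ((z / 2) ^ 2)
  refine Summable.of_norm_bounded
    ((Real.summable_pow_div_factorial (R * (z / 2) * |M|)).mul_left (K * D)) fun k ↦ ?_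
  calc ‖‖besselCoeff c lam z k‖ * M ^ k‖
    _ = ‖c k‖ * |besselJ ((k : ℝ) + lam) z| * |M| ^ k := by
      rw [norm_mul, norm_norm, besselCoeff, norm_mul, Complex.norm_real, norm_pow,
        Real.norm_eq_abs, Real.norm_eq_abs]
    _ ≤ K * R ^ k * (D * ((z / 2) ^ k / k.factorial)) * |M| ^ k := by
      gcongr
      · exact (norm_nonneg _).trans (hc k)
      · exact hc k
      · exact abs_besselJ_nat_add_le hlam hz k
    _ = K * D * ((R * (z / 2) * |M|) ^ k / k.factorial) := by
      rw [mul_pow, mul_pow]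
      ring

end Bessel

section GegenbauerSeries

variable {E : Type*} [NormedAddCommGroup E] [NormedSpace ℝ E]

/-- The Gegenbauer series `∑ₖ C_k^λ(w) p_k` with coefficients `p_k` in a real normed space: the
common form of the series of `A_λ` and `B_λ`. Its value is `0` where the series does not converge
unconditionally. -/
def gegSeries (lam : ℝ) (p : ℕ → E) (w : ℝ) : E :=
  ∑' k, geg lam k w • p k

variable (lam : ℝ) (p : ℕ → E) (w : ℝ)

lemma tsum_deriv_geg_smul :
    ∑' k, deriv (geg lam k) w • p k =
      (2 * lam) • gegSeries (lam + 1) (fun k ↦ p (k + 1)) w := by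
  have hsupport : Function.support (fun k ↦ deriv (geg lam k) w • p k) ⊆ Set.range Nat.succ := by
    rintro (_ | k) hk
    · simp [deriv_geg_zero] at hk
    · exact ⟨k, rfl⟩
  rw [← Nat.succ_injective.tsum_eq hsupport, gegSeries, ← tsum_const_smul'']
  simp only [Nat.succ_eq_add_one, deriv_geg_succ, mul_smul]

variable {p} in
lemma hasDerivAt_gegSeries [CompleteSpace E] (hp : ∀ M : ℝ, Summable fun k ↦ ‖p k‖ * M ^ k) :
    HasDerivAt (gegSeries lam p)
      ((2 * lam) • gegSeries (lam + 1) (fun k ↦ p (k + 1)) w) w := by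
  rw [← tsum_deriv_geg_smul]
  set r := |w| + 1
  have hr : 1 ≤ r := le_add_of_nonneg_left (abs_nonneg w)
  have hwr : w ∈ Metric.ball 0 r := by simp [r]
  have habs : ∀ y ∈ Metric.ball (0 : ℝ) r, |y| ≤ r := fun y hy ↦ (mem_ball_zero_iff.1 hy).le
  have hderiv_le : ∀ k, ∀ y ∈ Metric.ball (0 : ℝ) r, ‖deriv (geg lam k) y • p k‖ ≤
      2 * |lam| * (‖p k‖ * (4 * (1 + |lam + 1|) * r) ^ k) := fun k y hy ↦ by
    rw [norm_smul, Real.norm_eq_abs, mul_left_comm, mul_comm]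
    gcongr
    exact abs_deriv_geg_le lam hr (habs y hy) k
  have hsummable : Summable fun k ↦ geg lam k w • p k := by
    refine Summable.of_norm_bounded (hp (4 * (1 + |lam|) * r)) fun k ↦ ?_
    rw [norm_smul, Real.norm_eq_abs, mul_comm]
    gcongr
    exact abs_geg_le lam hr (habs w hwr) k
  exact hasDerivAt_tsum_of_isPreconnected ((hp _).mul_left _) Metric.isOpen_ball
    (convex_ball 0 r).isPreconnected
    (fun k y _ ↦ (differentiableAt_geg lam y k).hasDerivAt.smul_const (p k))
    hderiv_le hwr hsummable hwr

end GegenbauerSeries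

section Coefficients

/-- The coefficient `i^{2λ+2} + (-1)^k` of `A_λ` and `C_λ`. -/
def coeffA (lam : ℝ) (k : ℕ) : ℂ :=
  Complex.I ^ ((2 * lam + 2 : ℝ) : ℂ) + (-1 : ℂ) ^ k

/-- The coefficient `(k + λ) (i^{2λ+2} - (-1)^k)` of `B_λ`. -/
def coeffB (lam : ℝ) (k : ℕ) : ℂ :=
  ((k : ℂ) + (lam : ℂ)) * (Complex.I ^ ((2 * lam + 2 : ℝ) : ℂ) - (-1 : ℂ) ^ k)

variable (lam : ℝ)

lemma I_cpow_two_mul_add_one_add_two :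
    Complex.I ^ ((2 * (lam + 1) + 2 : ℝ) : ℂ) = -Complex.I ^ ((2 * lam + 2 : ℝ) : ℂ) := by
  rw [show ((2 * (lam + 1) + 2 : ℝ) : ℂ) = ((2 * lam + 2 : ℝ) : ℂ) + (2 : ℕ) by push_cast; ring,
    Complex.cpow_add _ _ Complex.I_ne_zero, Complex.cpow_natCast, Complex.I_sq, mul_neg_one]

lemma norm_I_cpow_ofReal (x : ℝ) : ‖Complex.I ^ (x : ℂ)‖ = 1 := by
  rw [Complex.norm_cpow_of_ne_zero Complex.I_ne_zero]
  simp

lemma coeffA_succ (k : ℕ) : coeffA lam (k + 1) = -coeffA (lam + 1) k := by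
  rw [coeffA, coeffA, I_cpow_two_mul_add_one_add_two]
  ring

lemma coeffB_succ (k : ℕ) : coeffB lam (k + 1) = -coeffB (lam + 1) k := by
  rw [coeffB, coeffB, I_cpow_two_mul_add_one_add_two]
  push_cast
  ring

lemma norm_coeffA_le (k : ℕ) : ‖coeffA lam k‖ ≤ 2 := by
  refine (norm_add_le _ _).trans_eq ?_
  rw [norm_I_cpow_ofReal, norm_pow, norm_neg, norm_one, one_pow]
  norm_num

lemma norm_coeffB_le (k : ℕ) : ‖coeffB lam k‖ ≤ 2 * (1 + |lam|) * 2 ^ k := by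
  have hlin : ‖(k : ℂ) + (lam : ℂ)‖ ≤ (1 + |lam|) * 2 ^ k := by
    have hk : (k : ℝ) ≤ 2 ^ k := mod_cast Nat.lt_two_pow_self.le
    have hone : (1 : ℝ) ≤ 2 ^ k := one_le_pow₀ one_le_two
    calc ‖(k : ℂ) + (lam : ℂ)‖
      _ ≤ k + |lam| := by simpa using norm_add_le (k : ℂ) (lam : ℂ)
      _ ≤ (1 + |lam|) * 2 ^ k := by nlinarith [abs_nonneg lam]
  have hosc : ‖Complex.I ^ ((2 * lam + 2 : ℝ) : ℂ) - (-1 : ℂ) ^ k‖ ≤ 2 := by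
    refine (norm_sub_le _ _).trans_eq ?_
    rw [norm_I_cpow_ofReal, norm_pow, norm_neg, norm_one, one_pow]
    norm_num
  calc ‖coeffB lam k‖
    _ ≤ (1 + |lam|) * 2 ^ k * 2 := by
      rw [coeffB, norm_mul]
      gcongr
    _ = 2 * (1 + |lam|) * 2 ^ k := by ring

variable {lam} in
lemma gegSeries_besselCoeff_succ {c d : ℕ → ℂ} (hcd : ∀ k, c (k + 1) = -d k) (w z : ℝ) :
    gegSeries (lam + 1) (fun k ↦ besselCoeff c lam z (k + 1)) w =
      -gegSeries (lam + 1) (besselCoeff d (lam + 1) z) w := by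
  rw [gegSeries, gegSeries, ← tsum_neg]
  refine tsum_congr fun k ↦ ?_
  rw [besselCoeff, besselCoeff, hcd, Nat.cast_succ, add_right_comm, add_assoc (k : ℝ), neg_mul,
    smul_neg]

variable {lam} in
lemma hasDerivAt_gegSeries_besselCoeff {c d : ℕ → ℂ} {K R z : ℝ} (hc : ∀ k, ‖c k‖ ≤ K * R ^ k)
    (hcd : ∀ k, c (k + 1) = -d k) (hlam : 0 ≤ lam) (hz : 0 ≤ z) (w : ℝ) :
    HasDerivAt (gegSeries lam (besselCoeff c lam z))
      (-(2 * lam) * gegSeries (lam + 1) (besselCoeff d (lam + 1) z) w) w := by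
  refine (hasDerivAt_gegSeries lam w
    (summable_norm_besselCoeff_mul_pow hc hlam hz)).congr_deriv ?_
  rw [gegSeries_besselCoeff_succ hcd, Complex.real_smul]
  push_cast
  ring

end Coefficients

section Kernel

variable {lam z : ℝ}

lemma Afun_eq_gegSeries (lam w z : ℝ) :
    Afun lam w z =
      ((2 ^ (lam - 1) * Real.Gamma (lam + 1) * z ^ (-lam) : ℝ) : ℂ) *
        gegSeries lam (besselCoeff (coeffA lam) lam z) w := by
  rw [Afun, Complex.ofReal_mul _ (z ^ (-lam)), mul_assoc, gegSeries,
    ← tsum_mul_left (a := ((z ^ (-lam) : ℝ) : ℂ))]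
  congr 1
  refine tsum_congr fun k ↦ ?_
  rw [Complex.real_smul, besselCoeff, coeffA]
  push_cast
  ring

lemma Bfun_eq_gegSeries (lam w z : ℝ) :
    Bfun lam w z =
      -((2 ^ (lam - 1) * Real.Gamma lam * z ^ (-lam) : ℝ) : ℂ) *
        gegSeries lam (besselCoeff (coeffB lam) lam z) w := by
  rw [Bfun, Complex.ofReal_mul _ (z ^ (-lam)), ← neg_mul, mul_assoc, gegSeries,
    ← tsum_mul_left (a := ((z ^ (-lam) : ℝ) : ℂ))]
  congr 1
  refine tsum_congr fun k ↦ ?_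
  rw [Complex.real_smul, besselCoeff, coeffB]
  push_cast
  ring

lemma Cfun_eq_gegSeries (lam w z : ℝ) :
    Cfun lam w z =
      ((2 ^ (lam - 1) * Real.Gamma lam * z ^ (-lam - 1) * (2 * lam) : ℝ) : ℂ) *
        gegSeries (lam + 1) (besselCoeff (coeffA (lam + 1)) (lam + 1) z) w := by
  have hderiv : ∑' k : ℕ, (Complex.I ^ ((2 * lam + 2 : ℝ) : ℂ) + (-1 : ℂ) ^ k) *
      ((z ^ (-lam - 1) * besselJ ((k : ℝ) + lam) z * deriv (geg lam k) w : ℝ) : ℂ) =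
      ((z ^ (-lam - 1) : ℝ) : ℂ) *
        ∑' k : ℕ, deriv (geg lam k) w • besselCoeff (coeffA lam) lam z k := by
    rw [← tsum_mul_left]
    refine tsum_congr fun k ↦ ?_
    rw [Complex.real_smul, besselCoeff, coeffA]
    push_cast
    ring
  rw [Cfun, hderiv, tsum_deriv_geg_smul, gegSeries_besselCoeff_succ (coeffA_succ lam),
    Complex.real_smul]
  push_cast
  ring

lemma two_rpow_add_one_sub_one (lam : ℝ) : (2 : ℝ) ^ (lam + 1 - 1) = 2 ^ (lam - 1) * 2 := by
  rw [add_sub_right_comm, Real.rpow_add_one two_ne_zero]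

lemma mul_rpow_neg_add_one (hz : z ≠ 0) (lam : ℝ) : z * z ^ (-(lam + 1)) = z ^ (-lam) := by
  rw [neg_add', mul_comm, ← Real.rpow_add_one hz, sub_add_cancel]

lemma hasDerivAt_Afun (hlam : 0 ≤ lam) (hz : 0 < z) (w : ℝ) :
    HasDerivAt (fun w' ↦ Afun lam w' z) (-(lam * z / (lam + 1)) * Afun (lam + 1) w z) w := by
  have hlam1 : lam + 1 ≠ 0 := by positivity
  have hlam1C : (lam : ℂ) + 1 ≠ 0 := mod_cast hlam1
  simp only [Afun_eq_gegSeries]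
  have hgrowth (k : ℕ) : ‖coeffA lam k‖ ≤ 2 * 1 ^ k := by simpa using norm_coeffA_le lam k
  refine ((hasDerivAt_gegSeries_besselCoeff hgrowth (coeffA_succ lam) hlam hz.le
    w).const_mul _).congr_deriv ?_
  rw [Real.Gamma_add_one hlam1, two_rpow_add_one_sub_one, ← mul_rpow_neg_add_one hz.ne']
  push_cast
  field_simp

lemma hasDerivAt_Bfun (hlam : 0 < lam) (hz : 0 < z) (w : ℝ) :
    HasDerivAt (fun w' ↦ Bfun lam w' z) (-z * Bfun (lam + 1) w z) w := by
  simp only [Bfun_eq_gegSeries]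
  refine ((hasDerivAt_gegSeries_besselCoeff (norm_coeffB_le lam) (coeffB_succ lam) hlam.le hz.le
    w).const_mul _).congr_deriv ?_
  rw [Real.Gamma_add_one hlam.ne', two_rpow_add_one_sub_one, ← mul_rpow_neg_add_one hz.ne']
  push_cast
  ring

lemma Afun_add_one_eq_mul_Cfun (hlam : lam ≠ 0) (hlam1 : lam + 1 ≠ 0) (w z : ℝ) :
    Afun (lam + 1) w z = (lam + 1) * Cfun lam w z := by
  rw [Afun_eq_gegSeries, Cfun_eq_gegSeries, Real.Gamma_add_one hlam1, Real.Gamma_add_one hlam,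
    two_rpow_add_one_sub_one, neg_add']
  push_cast
  ring

theorem recursions_ABC_general (hlam : 0 < lam) (hz : 0 < z) (w : ℝ) :
    Afun (lam + 1) w z
      = -(((lam + 1 : ℝ) : ℂ) / (lam : ℂ)) * (z : ℂ)⁻¹ * deriv (fun w' ↦ Afun lam w' z) w ∧
    Bfun (lam + 1) w z = -(z : ℂ)⁻¹ * deriv (fun w' ↦ Bfun lam w' z) w ∧
    Cfun lam w z = -(1 / ((lam : ℂ) * (z : ℂ))) * deriv (fun w' ↦ Afun lam w' z) w := by
  have hlam1 : lam + 1 ≠ 0 := by positivity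
  have hlamC : (lam : ℂ) ≠ 0 := mod_cast hlam.ne'
  have hlam1C : (lam : ℂ) + 1 ≠ 0 := mod_cast hlam1
  have hzC : (z : ℂ) ≠ 0 := mod_cast hz.ne'
  rw [(hasDerivAt_Afun hlam.le hz w).deriv, (hasDerivAt_Bfun hlam hz w).deriv,
    Afun_add_one_eq_mul_Cfun hlam.ne' hlam1]
  push_cast
  refine ⟨?_, ?_, ?_⟩ <;> field_simp

end Kernel

/-- The recursion relations
`A_{λ+1}(w,z) = -((λ+1)/λ) z⁻¹ ∂_w A_λ(w,z)`,
`B_{λ+1}(w,z) = -z⁻¹ ∂_w B_λ(w,z)`, and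
`C_λ(w,z) = -(1/(λz)) ∂_w A_λ(w,z)`. -/
theorem recursions_ABC (lam : ℝ) (hlam : 1 ≤ lam) (z : ℝ) (hz : 0 < z)
    (w : ℝ) (hw : w ∈ Set.Ioo (-1 : ℝ) 1) :
    Afun (lam + 1) w z
      = -(((lam + 1 : ℝ) : ℂ)/(lam : ℂ)) * ((z : ℂ))⁻¹ * deriv (fun w' => Afun lam w' z) w ∧
    Bfun (lam + 1) w z = -((z : ℂ))⁻¹ * deriv (fun w' => Bfun lam w' z) w ∧
    Cfun lam w z = -(1/((lam : ℂ) * (z : ℂ))) * deriv (fun w' => Afun lam w' z) w :=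
  recursions_ABC_general (zero_lt_one.trans_le hlam) hz w

end CliffordFourier
end
end

section
/- Let m = 2. For x, y ∈ ℝ²∖{0} write w = cos θ = ⟨x,y⟩/(|x||y|) and z = |x||y|, and define the Clifford–Fourier kernel K_−(x,y) = B_0(w,z) + (x∧y) C_0(w,z), where B_0(w,z) = J_0(z) + 2 Σ_{k≥1} J_{2k}(z) cos(2kθ) and C_0(w,z) = (2/z) Σ_{k≥1} J_{2k−1}(z) sin((2k−1)θ)/sin θ. Then K_−(x,y) = cos t + (x∧y) (sin t)/t, where t = |x∧y| = √(|x|²|y|² − ⟨x,y⟩²); equivalently K_−(x,y) = cos(x₁y₂ − x₂y₁) + e₁e₂ sin(x₁y₂ − x₂y₁). -/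
open scoped BigOperators
open MeasureTheory

noncomputable section

namespace CliffordFourier

variable {m : ℕ}

/-!
The Bessel functions of integer order have the generating function
`exp (z / 2 * (u - u⁻¹)) = ∑ n : ℤ, J_n(z) u ^ n`: multiply the exponential series of `z / 2 * u`
and `-(z / 2) * u⁻¹`, and collect the products of a degree `p` and a degree `q` term according to
`n = p - q`. At `u = exp (θ * I)` this is the Jacobi–Anger expansion of `exp (z * sin θ * I)`.
Because `J_{-n} = (-1) ^ n J_n`, its real part contains only even orders and its imaginary part only
odd ones, so that `B₀ = cos (z * sin θ)` and `C₀ = sin (z * sin θ) / (z * sin θ)`. In the plane,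
`z * sin θ = |x ∧ y| = |x₁ y₂ - x₂ y₁|`.
-/

/-- The `j`-th term of the power series defining `besselJ a z`. Where `Γ (j + a + 1)` has a pole,
Mathlib's `Γ` and hence the quotient are zero, in agreement with the entire function `1 / Γ`;
negative integer orders `a` are therefore covered without a separate convention. -/
def besselJTerm (a z : ℝ) (j : ℕ) : ℝ :=
  ((-1 : ℝ) ^ j * (z / 2) ^ (2 * (j : ℝ) + a)) / (j.factorial * Real.Gamma ((j : ℝ) + a + 1))

theorem besselJTerm_natCast_sub_natCast (p q : ℕ) (z : ℝ) :
    besselJTerm (p - q) z q = (-1) ^ q * (z / 2) ^ (p + q) / (q.factorial * p.factorial) := by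
  have h_exponent : 2 * (q : ℝ) + (p - q) = (p + q : ℕ) := by push_cast; ring
  have h_gamma : (q : ℝ) + (p - q) + 1 = p + 1 := by ring
  rw [besselJTerm, h_exponent, h_gamma, Real.rpow_natCast, Real.Gamma_nat_eq_factorial]

theorem besselJTerm_intCast_eq_zero {n : ℤ} {j : ℕ} (h : j + n < 0) (z : ℝ) :
    besselJTerm n z j = 0 := by
  obtain ⟨k, hk⟩ := Int.eq_ofNat_of_zero_le (show 0 ≤ -(j + n + 1) by lia)
  have h_pole : (j : ℝ) + n + 1 = -k := by
    rw [eq_neg_iff_add_eq_zero]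
    exact_mod_cast (by lia : (j : ℤ) + n + 1 + k = 0)
  rw [besselJTerm, h_pole, Real.Gamma_neg_nat_eq_zero, mul_zero, div_zero]

theorem besselJ_neg_natCast (n : ℕ) (z : ℝ) : besselJ (-n) z = (-1) ^ n * besselJ n z := by
  have h_shift (j : ℕ) : besselJTerm (-n) z (j + n) = (-1) ^ n * besselJTerm n z j := by
    have h_neg := besselJTerm_natCast_sub_natCast j (j + n) z
    have h_pos := besselJTerm_natCast_sub_natCast (j + n) j z
    rw [Nat.cast_add, sub_add_cancel_left] at h_neg
    rw [Nat.cast_add, add_sub_cancel_left] at h_pos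
    rw [h_neg, h_pos]
    ring
  have h_support : Function.support (besselJTerm (-n) z) ⊆ Set.range (· + n) := by
    intro j hj
    refine ⟨j - n, Nat.sub_add_cancel (not_lt.mp fun hjn ↦ hj ?_)⟩
    exact_mod_cast besselJTerm_intCast_eq_zero (n := -n) (j := j) (by lia) z
  calc besselJ (-n) z = ∑' j, besselJTerm (-n) z (j + n) :=
        ((add_left_injective n).tsum_eq h_support).symm
    _ = ∑' j, (-1) ^ n * besselJTerm n z j := tsum_congr h_shift
    _ = (-1) ^ n * besselJ n z := tsum_mul_left

theorem hasSum_pow_div_factorial_mul_pow_div_factorial (v w : ℂ) :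
    HasSum (fun p : ℕ × ℕ ↦ v ^ p.1 / p.1.factorial * (w ^ p.2 / p.2.factorial))
      (Complex.exp (v + w)) := by
  have h_exp (a : ℂ) : HasSum (fun n : ℕ ↦ a ^ n / n.factorial) (Complex.exp a) :=
    Complex.exp_eq_exp_ℂ ▸ NormedSpace.expSeries_div_hasSum_exp a
  have h_summable := summable_mul_of_summable_norm
    (NormedSpace.norm_expSeries_div_summable v) (NormedSpace.norm_expSeries_div_summable w)
  simpa only [Complex.exp_add] using (h_exp v).mul (h_exp w) h_summable

theorem besselJTerm_mul_zpow_sub (p q : ℕ) (z : ℝ) {u : ℂ} (hu : u ≠ 0) :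
    (besselJTerm (p - q) z q : ℂ) * u ^ (p - q : ℤ) =
      (z / 2 * u) ^ p / p.factorial * ((-(z / 2) * u⁻¹) ^ q / q.factorial) := by
  rw [besselJTerm_natCast_sub_natCast, zpow_sub₀ hu, zpow_natCast, zpow_natCast]
  push_cast
  rw [neg_mul, neg_pow (_ * u⁻¹), mul_pow, mul_pow, inv_pow]
  ring

theorem hasSum_besselJTerm_mul_zpow (z : ℝ) {u : ℂ} (hu : u ≠ 0) :
    HasSum (fun p : ℤ × ℕ ↦ (besselJTerm p.1 z p.2 : ℂ) * u ^ p.1)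
      (Complex.exp (z / 2 * (u - u⁻¹))) := by
  have h_inj : Function.Injective fun p : ℕ × ℕ ↦ ((p.1 - p.2 : ℤ), p.2) := by
    rintro ⟨p, q⟩ ⟨p', q'⟩ h
    simp only [Prod.mk.injEq] at h ⊢
    lia
  refine (h_inj.hasSum_iff ?_).mp ?_
  · rintro ⟨n, j⟩ h_range
    have h_neg : j + n < 0 := by
      by_contra! h_nonneg
      exact h_range ⟨((j + n).toNat, j), by simp only [Prod.mk.injEq]; lia⟩
    simp [besselJTerm_intCast_eq_zero h_neg]
  · convert hasSum_pow_div_factorial_mul_pow_div_factorial (z / 2 * u) (-(z / 2) * u⁻¹) using 1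
    · ext ⟨p, q⟩
      simpa using besselJTerm_mul_zpow_sub p q z hu
    · congr 1
      ring

theorem hasSum_besselJ_mul_zpow (z : ℝ) {u : ℂ} (hu : u ≠ 0) :
    HasSum (fun n : ℤ ↦ (besselJ n z : ℂ) * u ^ n) (Complex.exp (z / 2 * (u - u⁻¹))) := by
  have h := hasSum_besselJTerm_mul_zpow z hu
  have h_fiber (n : ℤ) : ∑' j, (besselJTerm n z j : ℂ) * u ^ n = besselJ n z * u ^ n := by
    rw [tsum_mul_right, ← Complex.ofReal_tsum]
    rfl
  exact h.prod_fiberwise fun n ↦ h_fiber n ▸ (h.summable.prod_factor n).hasSum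

theorem hasSum_besselJ_mul_exp (z θ : ℝ) :
    HasSum (fun n : ℤ ↦ (besselJ n z : ℂ) * Complex.exp ((n * θ : ℝ) * Complex.I))
      (Complex.exp ((z * Real.sin θ : ℝ) * Complex.I)) := by
  convert hasSum_besselJ_mul_zpow z (Complex.exp_ne_zero (θ * Complex.I)) using 2 with n
  · rw [← Complex.exp_int_mul]
    push_cast
    ring_nf
  · rw [← Complex.exp_neg, ← Complex.two_sinh, Complex.sinh_mul_I]
    push_cast
    ring_nf

theorem hasSum_besselJ_mul_cos (z θ : ℝ) :
    HasSum (fun n : ℤ ↦ besselJ n z * Real.cos (n * θ)) (Real.cos (z * Real.sin θ)) := by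
  simpa only [Complex.re_ofReal_mul, Complex.exp_ofReal_mul_I_re] using
    Complex.hasSum_re (hasSum_besselJ_mul_exp z θ)

theorem hasSum_besselJ_mul_sin (z θ : ℝ) :
    HasSum (fun n : ℤ ↦ besselJ n z * Real.sin (n * θ)) (Real.sin (z * Real.sin θ)) := by
  simpa only [Complex.im_ofReal_mul, Complex.exp_ofReal_mul_I_im] using
    Complex.hasSum_im (hasSum_besselJ_mul_exp z θ)

section Parity

variable {R : Type*} [Ring R] [TopologicalSpace R] {f : ℕ → R} {s : R}

theorem hasSum_one_add_neg_one_pow_mul_iff :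
    HasSum (fun n ↦ (1 + (-1) ^ n) * f n) s ↔ HasSum (fun k ↦ 2 * f (2 * k)) s := by
  have h_inj : Function.Injective fun k : ℕ ↦ 2 * k := mul_right_injective₀ two_ne_zero
  rw [← h_inj.hasSum_iff fun n hn ↦ ?_]
  · simp [Function.comp_def, one_add_one_eq_two]
  · have h_odd : Odd n := by
      rw [← Nat.not_even_iff_odd, even_iff_exists_two_mul]
      exact fun ⟨k, hk⟩ ↦ hn ⟨k, hk.symm⟩
    simp [h_odd.neg_one_pow]

theorem hasSum_one_sub_neg_one_pow_mul_iff :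
    HasSum (fun n ↦ (1 - (-1) ^ n) * f n) s ↔ HasSum (fun k ↦ 2 * f (2 * k + 1)) s := by
  have h_inj : Function.Injective fun k : ℕ ↦ 2 * k + 1 := fun k l h ↦ by simpa using h
  rw [← h_inj.hasSum_iff fun n hn ↦ ?_]
  · simp [Function.comp_def, pow_succ, one_add_one_eq_two]
  · have h_even : Even n := by
      rw [← Nat.not_odd_iff_even]
      exact fun ⟨k, hk⟩ ↦ hn ⟨k, hk.symm⟩
    simp [h_even.neg_one_pow]

end Parity

theorem besselJ_zero_add_two_mul_tsum_even_mul_cos (z θ : ℝ) :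
    besselJ 0 z + 2 * ∑' k : ℕ, besselJ (2 * (k : ℝ) + 2) z * Real.cos ((2 * (k : ℝ) + 2) * θ) =
      Real.cos (z * Real.sin θ) := by
  have h_fold : HasSum (fun n : ℕ ↦ (1 + (-1) ^ n) * (besselJ n z * Real.cos (n * θ)))
      (Real.cos (z * Real.sin θ) + besselJ 0 z) := by
    convert (hasSum_besselJ_mul_cos z θ).nat_add_neg using 2 with n
    · push_cast
      rw [besselJ_neg_natCast, neg_mul, Real.cos_neg]
      ring
    · simp
  have h_even := hasSum_one_add_neg_one_pow_mul_iff.mp h_fold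
  have h_index (k : ℕ) : ((2 * (k + 1) : ℕ) : ℝ) = 2 * k + 2 := by push_cast; ring
  have h_split := h_even.tsum_eq.symm.trans h_even.summable.tsum_eq_zero_add
  simp only [h_index, tsum_mul_left, mul_zero, Nat.cast_zero, zero_mul, Real.cos_zero,
    mul_one] at h_split
  linarith

theorem two_mul_tsum_besselJ_odd_mul_sin (z θ : ℝ) :
    2 * ∑' k : ℕ, besselJ (2 * (k : ℝ) + 1) z * Real.sin ((2 * (k : ℝ) + 1) * θ) =
      Real.sin (z * Real.sin θ) := by
  have h_fold : HasSum (fun n : ℕ ↦ (1 - (-1) ^ n) * (besselJ n z * Real.sin (n * θ)))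
      (Real.sin (z * Real.sin θ)) := by
    convert (hasSum_besselJ_mul_sin z θ).nat_add_neg using 2 with n
    · push_cast
      rw [besselJ_neg_natCast, neg_mul, Real.sin_neg]
      ring
    · simp
  have h_odd := hasSum_one_sub_neg_one_pow_mul_iff.mp h_fold
  rw [← tsum_mul_left]
  simpa using h_odd.tsum_eq

theorem two_div_mul_tsum_besselJ_odd_mul_sin_div_sin (z θ : ℝ) :
    2 / z * ∑' k : ℕ, besselJ (2 * (k : ℝ) + 1) z *
        (Real.sin ((2 * (k : ℝ) + 1) * θ) / Real.sin θ) =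
      Real.sin (z * Real.sin θ) / (z * Real.sin θ) := by
  simp only [← mul_div_assoc]
  rw [tsum_div_const, div_mul_div_comm, two_mul_tsum_besselJ_odd_mul_sin]

theorem mul_sin_arccos_div {r : ℝ} (hr : 0 ≤ r) (c : ℝ) :
    r * Real.sin (Real.arccos (c / r)) = Real.sqrt (r ^ 2 - c ^ 2) := by
  rcases hr.eq_or_lt with rfl | hr_pos
  · rw [zero_mul, Real.sqrt_eq_zero_of_nonpos (by nlinarith [sq_nonneg c])]
  · have h_scale : r ^ 2 - c ^ 2 = r ^ 2 * (1 - (c / r) ^ 2) := by field_simp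
    rw [Real.sin_arccos, h_scale, Real.sqrt_mul (sq_nonneg r), Real.sqrt_sq hr]

theorem sin_abs_div_abs_mul_self (d : ℝ) : Real.sin |d| / |d| * d = Real.sin d := by
  have h_cancel : Real.sin d / d * d = Real.sin d := div_mul_cancel_of_imp (by rintro rfl; simp)
  rcases abs_choice d with h | h <;> rw [h]
  · exact h_cancel
  · rwa [Real.sin_neg, neg_div_neg_eq]

theorem nrm_mul_nrm_mul_sin_arccos (x y : Fin m → ℝ) :
    nrm x * nrm y * Real.sin (Real.arccos (ip x y / (nrm x * nrm y))) =
      Real.sqrt (ip x x * ip y y - ip x y ^ 2) := by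
  have h_nonneg : 0 ≤ nrm x * nrm y := mul_nonneg (Real.sqrt_nonneg _) (Real.sqrt_nonneg _)
  rw [mul_sin_arccos_div h_nonneg, mul_pow, nrm_sq, nrm_sq]

theorem ip_mul_ip_sub_sq_two (x y : Fin 2 → ℝ) :
    ip x x * ip y y - ip x y ^ 2 = (x 0 * y 1 - x 1 * y 0) ^ 2 := by
  simp only [ip, Fin.sum_univ_two]
  ring

theorem ofReal_smul (r : ℝ) (a : Cl m) : (r : ℂ) • a = r • a := rfl

theorem wedge_two (x y : Fin 2 → ℝ) :
    wedge 2 x y = (x 0 * y 1 - x 1 * y 0) • (e 2 0 * e 2 1) := by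
  rw [← ofReal_smul]
  simp [wedge, Fin.sum_univ_two]

/-- In dimension `m = 2`, the Clifford-Fourier kernel
`K_-(x,y) = B_0(w,z) + (x∧y) C_0(w,z)`, with
`B_0(w,z) = J_0(z) + 2 Σ_{k≥1} J_{2k}(z) cos(2kθ)` and
`C_0(w,z) = (2/z) Σ_{k≥1} J_{2k-1}(z) sin((2k-1)θ)/sin θ`
(`w = cos θ = ⟨x,y⟩/(|x||y|)`, `z = |x||y|`), equals
`cos t + (x∧y) (sin t)/t` with `t = |x∧y| = √(|x|²|y|² - ⟨x,y⟩²)`, or equivalently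
`cos(x₁y₂ - x₂y₁) + e₁e₂ sin(x₁y₂ - x₂y₁)`. -/
theorem kernel_dim_two (x y : Fin 2 → ℝ) (hx : x ≠ 0) (hy : y ≠ 0)
    (θ z t : ℝ)
    (hθ : θ = Real.arccos (ip x y / (nrm x * nrm y)))
    (hz : z = nrm x * nrm y)
    (ht : t = Real.sqrt (ip x x * ip y y - ip x y ^ 2)) :
    (besselJ 0 z + 2 * ∑' k : ℕ, besselJ (2*(k:ℝ) + 2) z * Real.cos ((2*(k:ℝ) + 2) * θ))
        • (1 : Cl 2)
      + ((2/z) * ∑' k : ℕ, besselJ (2*(k:ℝ) + 1) z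
          * (Real.sin ((2*(k:ℝ) + 1) * θ) / Real.sin θ)) • wedge 2 x y
      = Real.cos t • (1 : Cl 2) + (Real.sin t / t) • wedge 2 x y ∧
    (besselJ 0 z + 2 * ∑' k : ℕ, besselJ (2*(k:ℝ) + 2) z * Real.cos ((2*(k:ℝ) + 2) * θ))
        • (1 : Cl 2)
      + ((2/z) * ∑' k : ℕ, besselJ (2*(k:ℝ) + 1) z
          * (Real.sin ((2*(k:ℝ) + 1) * θ) / Real.sin θ)) • wedge 2 x y
      = Real.cos (x 0 * y 1 - x 1 * y 0) • (1 : Cl 2)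
        + Real.sin (x 0 * y 1 - x 1 * y 0) • (e 2 0 * e 2 1) := by
  have h_sqrt : t = |x 0 * y 1 - x 1 * y 0| := by rw [ht, ip_mul_ip_sub_sq_two, Real.sqrt_sq_eq_abs]
  have h_angle : z * Real.sin θ = t := by rw [hz, hθ, ht, nrm_mul_nrm_mul_sin_arccos]
  rw [besselJ_zero_add_two_mul_tsum_even_mul_cos, two_div_mul_tsum_besselJ_odd_mul_sin_div_sin,
    h_angle]
  refine ⟨rfl, ?_⟩
  rw [wedge_two, smul_smul, h_sqrt, Real.cos_abs, sin_abs_div_abs_mul_self]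

end CliffordFourier
end
end
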